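/- In digraphs, 2-edge-connected blocks do not correspond to 2-edge-connected components: there exist a strongly connected digraph G = (V, E) and two distinct vertices v, w ∈ V such that v ↔₂ₑ w in G, but there is no subgraph H of G containing both v and w that is 2-edge-connected. -/

import Mathlib

variable {V : Type*}

/-- `p` is a path from `u` to `w` in the digraph with edge set `E`:
a nonempty list of vertices starting at `u`, ending at `w`, with consecutive edges in `E`. -/
def IsPathFrom (E : Set (V × V)) (u w : V) (p : List V) : Prop :=
  p.head? = some u ∧ p.getLast? = some w ∧ p.Chain' (fun a b => (a, b) ∈ E)

/-- There is a path from `u` to `w` in the digraph with edge set `E`. -/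
def Reaches (E : Set (V × V)) (u w : V) : Prop :=
  ∃ p, IsPathFrom E u w p

/-- Every vertex has a path to every other vertex. -/
def StronglyConnected (E : Set (V × V)) : Prop :=
  ∀ u w : V, Reaches E u w

/-- `v` and `w` are 2-edge-connected: `v = w` or, for every edge `e`,
there are paths from `v` to `w` and from `w` to `v` avoiding `e`. -/
def TwoEdgeConn (E : Set (V × V)) (v w : V) : Prop :=
  v = w ∨ ∀ e ∈ E, Reaches (E \ {e}) v w ∧ Reaches (E \ {e}) w v

/-- `w` is 2-edge-connected from `v`: for every edge `e` there is a path
from `v` to `w` avoiding `e`. -/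
def TwoEdgeConnFrom (E : Set (V × V)) (v w : V) : Prop :=
  ∀ e ∈ E, Reaches (E \ {e}) v w

/-- `u` dominates `w` in the flow graph with start vertex `s`:
every path from `s` to `w` contains `u`. -/
def Dominates (E : Set (V × V)) (s u w : V) : Prop :=
  ∀ p, IsPathFrom E s w p → u ∈ p

/-- `(u, w)` is a bridge of the flow graph with start vertex `s`:
every path from `s` to `w` contains the edge `(u, w)`. -/
def IsBridge (E : Set (V × V)) (s u w : V) : Prop :=
  (u, w) ∈ E ∧ ∀ p, IsPathFrom E s w p → (u, w) ∈ p.zip p.tail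

/-- `w` is marked in the flow graph with start vertex `s`: some bridge ends at `w`. -/
def Marked (E : Set (V × V)) (s w : V) : Prop :=
  ∃ u, IsBridge E s u w

/-- The reverse digraph: every edge direction is reversed. -/
def reverseE (E : Set (V × V)) : Set (V × V) :=
  {e | (e.2, e.1) ∈ E}

/-- `u` and `w` are mutually reachable. -/
def MutualReach (E : Set (V × V)) (u w : V) : Prop :=
  Reaches E u w ∧ Reaches E w u

/-- The number of strongly connected components: the number of equivalence
classes of the mutual-reachability relation. -/
noncomputable def numSCC (E : Set (V × V)) : ℕ :=
  Nat.card (Quot (MutualReach E))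

/-- `e` is a strong bridge: removing it increases the number of strongly
connected components. -/
def IsStrongBridge (E : Set (V × V)) (e : V × V) : Prop :=
  e ∈ E ∧ numSCC E < numSCC (E \ {e})

/-- `d` is the immediate dominator of `w` in the flow graph with start vertex `s`:
`d` is a proper dominator of `w` dominated by every proper dominator of `w`. -/
def ImmDomIs (E : Set (V × V)) (s w d : V) : Prop :=
  Dominates E s d w ∧ d ≠ w ∧ ∀ x, Dominates E s x w → x ≠ w → Dominates E s x d

/-- `r` is the deepest marked dominator `r_v` of `v`: either `r` is a marked
dominator of `v` dominated by every marked dominator of `v`, or no marked vertex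
dominates `v` and `r = s`. -/
def DeepestMarkedDomIs (E : Set (V × V)) (s v r : V) : Prop :=
  (Marked E s r ∧ Dominates E s r v ∧
    ∀ x, Marked E s x → Dominates E s x v → Dominates E s x r)
  ∨ (r = s ∧ ∀ x, Marked E s x → ¬ Dominates E s x v)

/-- `T(r)`: the vertices whose deepest marked dominator is `r`. -/
def Tset (E : Set (V × V)) (s r : V) : Set V :=
  {v | DeepestMarkedDomIs E s v r}

/-- The roots of the decomposition of the dominator tree: `s` and the marked vertices. -/
def IsRoot (E : Set (V × V)) (s r : V) : Prop :=
  r = s ∨ Marked E s r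

/-- `z` is a marked child (in the dominator tree) of a boundary vertex of `T(r)`. -/
def MarkedChildOfBoundary (E : Set (V × V)) (s r z : V) : Prop :=
  Marked E s z ∧ ∃ x ∈ Tset E s r, ImmDomIs E s z x

/-- The vertex set `V_r` of the auxiliary graph `G_r` (with `dr` playing the role
of `d(r)` when `r ≠ s`): the ordinary vertices `T(r)`, the marked children of
boundary vertices of `T(r)`, and (if `r ≠ s`) the vertex `d(r)`. -/
def auxVerts (E : Set (V × V)) (s r dr : V) : Set V :=
  Tset E s r ∪ {z | MarkedChildOfBoundary E s r z} ∪ {x | r ≠ s ∧ x = dr}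

/-- The edge set `E_r` of the auxiliary graph `G_r` (with `dr` playing the role of
`d(r)` when `r ≠ s`): edges of `G` between ordinary vertices; the edge `(v, w)` for
each boundary vertex `v ∈ T(r)` and marked child `w` of `v`; the edge `(d(r), r)` if
`r ≠ s`; and the shortcut edges of types (a), (b), (c). -/
def auxEdges (E : Set (V × V)) (s r dr : V) : Set (V × V) :=
  {e | e ∈ E ∧ e.1 ∈ Tset E s r ∧ e.2 ∈ Tset E s r} ∪
  {e | e.1 ∈ Tset E s r ∧ Marked E s e.2 ∧ ImmDomIs E s e.2 e.1} ∪
  {e | r ≠ s ∧ e = (dr, r)} ∪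
  {e | ∃ u v, (u, v) ∈ E ∧ u ∈ Tset E s r ∧ ¬ Dominates E s r v ∧ e = (u, dr)} ∪
  {e | ∃ u v z, (u, v) ∈ E ∧ v ∈ Tset E s r ∧ Dominates E s r u ∧ u ∉ Tset E s r ∧
      MarkedChildOfBoundary E s r z ∧ Dominates E s z u ∧ e = (z, v)} ∪
  {e | ∃ u v z, (u, v) ∈ E ∧ Dominates E s r u ∧ u ∉ Tset E s r ∧ ¬ Dominates E s r v ∧
      MarkedChildOfBoundary E s r z ∧ Dominates E s z u ∧ e = (z, dr)}

/-- `H = (VH, EH)` is a 2-edge-connected digraph: it has at least two vertices, it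
is strongly connected, and it remains strongly connected after removing any single
edge. -/
def TwoECDigraph (VH : Set V) (EH : Set (V × V)) : Prop :=
  1 < VH.ncard ∧ (∀ u ∈ VH, ∀ x ∈ VH, Reaches EH u x) ∧
  ∀ e ∈ EH, ∀ u ∈ VH, ∀ x ∈ VH, Reaches (EH \ {e}) u x

theorem reaches_out {V : Type*} {E : Set (V × V)} {u x : V} (h : Reaches E u x) (hne : u ≠ x) :
    ∃ y, (u, y) ∈ E := by
  obtain ⟨p, h1, h2, h3⟩ := h
  match p, h1, h2, h3 with
  | [a], h1, h2, _ => simp at h1 h2; exact absurd (h1.symm.trans h2) hne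
  | a :: b :: l, h1, _, h3 =>
    simp at h1
    subst h1
    exact ⟨b, (List.isChain_cons_cons.1 h3).1⟩

theorem chain_in {V : Type*} {E : Set (V × V)} {x : V} : ∀ (p : List V) (u : V),
    p.head? = some u → p.getLast? = some x → p.IsChain (fun a b => (a, b) ∈ E) → u ≠ x →
    ∃ y, (y, x) ∈ E
  | [], _, h1, _, _, _ => by simp at h1
  | [a], u, h1, h2, _, hne => by
    simp at h1 h2; exact absurd (h1.symm.trans h2) hne
  | a :: b :: l, u, h1, h2, h3, hne => by
    by_cases hb : b = x
    · exact ⟨a, hb ▸ (List.isChain_cons_cons.1 h3).1⟩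
    · exact chain_in (b :: l) b rfl (by simpa using h2) (List.isChain_cons_cons.1 h3).2 hb

theorem reaches_in {V : Type*} {E : Set (V × V)} {u x : V} (h : Reaches E u x) (hne : u ≠ x) :
    ∃ y, (y, x) ∈ E := by
  obtain ⟨p, h1, h2, h3⟩ := h
  exact chain_in p u h1 h2 h3 hne

/-- The example graph. -/
def exE : Set (Fin 4 × Fin 4) := {(0,1), (0,2), (2,1), (1,0), (1,3), (3,0)}

theorem exE_sc : StronglyConnected exE := by
  intro u w
  fin_cases u <;> fin_cases w
  · exact ⟨[0], rfl, rfl, by simp [List.Chain', exE]⟩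
  · exact ⟨[0, 1], rfl, rfl, by simp [List.Chain', exE]⟩
  · exact ⟨[0, 2], rfl, rfl, by simp [List.Chain', exE]⟩
  · exact ⟨[0, 1, 3], rfl, rfl, by simp [List.Chain', exE]⟩
  · exact ⟨[1, 0], rfl, rfl, by simp [List.Chain', exE]⟩
  · exact ⟨[1], rfl, rfl, by simp [List.Chain', exE]⟩
  · exact ⟨[1, 0, 2], rfl, rfl, by simp [List.Chain', exE]⟩
  · exact ⟨[1, 3], rfl, rfl, by simp [List.Chain', exE]⟩
  · exact ⟨[2, 1, 0], rfl, rfl, by simp [List.Chain', exE]⟩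
  · exact ⟨[2, 1], rfl, rfl, by simp [List.Chain', exE]⟩
  · exact ⟨[2], rfl, rfl, by simp [List.Chain', exE]⟩
  · exact ⟨[2, 1, 3], rfl, rfl, by simp [List.Chain', exE]⟩
  · exact ⟨[3, 0], rfl, rfl, by simp [List.Chain', exE]⟩
  · exact ⟨[3, 0, 1], rfl, rfl, by simp [List.Chain', exE]⟩
  · exact ⟨[3, 0, 2], rfl, rfl, by simp [List.Chain', exE]⟩
  · exact ⟨[3], rfl, rfl, by simp [List.Chain', exE]⟩

theorem exE_two : TwoEdgeConn exE 0 1 := by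
  right
  intro e _
  constructor
  · by_cases h : e = (0,1)
    · exact ⟨[0,2,1], rfl, rfl, by subst h; simp [List.Chain', exE]⟩
    · exact ⟨[0,1], rfl, rfl, by simp [List.Chain', exE, Ne.symm h]⟩
  · by_cases h : e = (1,0)
    · exact ⟨[1,3,0], rfl, rfl, by subst h; simp [List.Chain', exE]⟩
    · exact ⟨[1,0], rfl, rfl, by simp [List.Chain', exE, Ne.symm h]⟩

/-- 2-edge-connected blocks do not correspond to 2-edge-connected components: there
are a strongly connected digraph `G` and distinct vertices `v, w` that are
2-edge-connected in `G`, yet no 2-edge-connected subgraph of `G` contains both. -/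
theorem blocks_differ_from_components :
    ∃ (V : Type) (_ : Fintype V) (E : Set (V × V)) (v w : V),
      StronglyConnected E ∧ v ≠ w ∧ TwoEdgeConn E v w ∧
      ¬ ∃ (VH : Set V) (EH : Set (V × V)), EH ⊆ E ∧
          (∀ e ∈ EH, e.1 ∈ VH ∧ e.2 ∈ VH) ∧ v ∈ VH ∧ w ∈ VH ∧
          TwoECDigraph VH EH := by
  refine ⟨Fin 4, inferInstance, exE, 0, 1, exE_sc, by decide, exE_two, ?_⟩
  rintro ⟨VH, EH, hsub, hV, h0, h1, -, hsc, h2⟩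
  have in2 : ∀ y, (y, 2) ∈ EH → y = 0 := fun y hy => by
    have := hsub hy
    simpa [exE] using this
  have out0 : ∀ y, (0, y) ∈ EH → y = 1 ∨ y = 2 := fun y hy => by
    have := hsub hy
    simpa [exE] using this
  have n2 : (2 : Fin 4) ∉ VH := by
    intro hm
    obtain ⟨y, hy⟩ := reaches_in (hsc 0 h0 2 hm) (by decide)
    obtain rfl := in2 y hy
    obtain ⟨z, hz, hz'⟩ := reaches_in (h2 _ hy 0 h0 2 hm) (by decide)
    obtain rfl := in2 z hz
    exact hz' rfl
  have out0' : ∀ y, (0, y) ∈ EH → y = 1 := fun y hy =>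
    (out0 y hy).resolve_right fun h => n2 (h ▸ (hV _ hy).2)
  obtain ⟨y, hy⟩ := reaches_out (hsc 0 h0 1 h1) (by decide)
  obtain rfl := out0' y hy
  obtain ⟨z, hz, hz'⟩ := reaches_out (h2 _ hy 0 h0 1 h1) (by decide)
  obtain rfl := out0' z hz
  exact hz' rfl
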